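/- Let X be a random vector in ℝ^d, d ≥ 1, and let L be an affine hyperplane in ℝ^d supporting C_X with 0 < P(X ∈ L) < 1. Then the identity I_X(v) = I_{X|L}(v) − log P(X ∈ L) holds for all v ∈ L if and only if pr_L(rint D(K_X)) = pr_L(rint D(K_{X|L})). -/

import Mathlib

/-!
Write `M(u) = E[exp(u·X)]` and `M_L(u) = E[exp(u·X); X ∈ L]`, let `ℓ` be the outward unit normal
of the supporting hyperplane `L = {ℓ·v = c}`, and put `U = D(K_X) + ℝℓ`.

Since `ℓ·X ≤ c` almost surely, dominated convergence shows that `exp(-tc) M(u + tℓ)` decreases to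
`M_L(u)` as `t → ∞` whenever `u ∈ U` (`tendsto_laplace`). Consequently, for `v ∈ L`, `I_X(v)` is the
supremum of `u·v - log M_L(u)` over `u ∈ U` (`rateFn_le_iff_of_mem_hyp`), whereas
`I_{X|L}(v) - log P(X ∈ L)` is the supremum of the same expression over all `u`
(`rateFn_cond_sub_log_le_iff`). Moreover `U ⊆ D(K_{X|L})`, because `M_L(u) ≤ exp(-tc) M(u + tℓ)`.
Equality of two extended reals is tested by comparing their real upper bounds, which turns all
statements about `I` into inequalities `exp(u·v - a) ≤ M_L(u)` in `[0, ∞]`.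

If the projections of the relative interiors agree, then `rint D(K_{X|L}) ⊆ U`, and an inequality
`exp(u·v - a) ≤ M_L(u)` valid on this relative interior extends radially to all of `D(K_{X|L})` by
convexity of `M_L` (`bound_of_bound_rint`).

Conversely, suppose that the suprema agree on `L`. If some `w ∈ D(K_{X|L})` were outside the
closure of `U`, a functional `b` separating `w` from `U` would be orthogonal to `ℓ`; along
`v₀ + n b ∈ L`, where `v₀ ∈ L` has finite rate, the supremum over all `u` would grow strictly
faster than the supremum over `U` (`edom_subset_closure`). So `U` is dense in `D(K_{X|L})`, and the
standard calculus of relative interiors of convex sets (`rint_shift`) gives the equality of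
projections.
-/

open MeasureTheory ProbabilityTheory Set Filter Topology
open scoped RealInnerProductSpace ENNReal ProbabilityTheory

noncomputable section

/-- The topological support of a measure on `ℝ^d`: the smallest closed set of full measure,
equivalently the set of points all of whose neighbourhoods have positive measure. -/
def msupp {d : ℕ} (μ : Measure (EuclideanSpace ℝ (Fin d))) : Set (EuclideanSpace ℝ (Fin d)) :=
  {x | ∀ U : Set (EuclideanSpace ℝ (Fin d)), IsOpen U → x ∈ U → 0 < μ U}

/-- The convex support `C_X` of a random vector with law `μ`. -/
def convSupp {d : ℕ} (μ : Measure (EuclideanSpace ℝ (Fin d))) : Set (EuclideanSpace ℝ (Fin d)) :=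
  convexHull ℝ (msupp μ)

/-- The logarithmic Laplace transform `K_X(u) = log E[exp(u·X)]`, with values in `(-∞, +∞]`. -/
def logLaplace {d : ℕ} (μ : Measure (EuclideanSpace ℝ (Fin d)))
    (u : EuclideanSpace ℝ (Fin d)) : EReal :=
  (∫⁻ x, ENNReal.ofReal (Real.exp ⟪u, x⟫) ∂μ).log

/-- The rate function `I_X(v) = sup_u (u·v - K_X(u))`. -/
def rateFn {d : ℕ} (μ : Measure (EuclideanSpace ℝ (Fin d)))
    (v : EuclideanSpace ℝ (Fin d)) : EReal :=
  ⨆ u : EuclideanSpace ℝ (Fin d), ((⟪u, v⟫ : ℝ) : EReal) - logLaplace μ u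

/-- The effective domain of an extended-real-valued function. -/
def edom {α : Type*} (f : α → EReal) : Set α := {x | f x < ⊤}

/-- The affine hyperplane with unit normal `ℓ` and offset `c`. -/
def hyp {d : ℕ} (ℓ : EuclideanSpace ℝ (Fin d)) (c : ℝ) : Set (EuclideanSpace ℝ (Fin d)) :=
  {v | ⟪ℓ, v⟫ = c}

/-- The hyperplane `{v : ℓ·v = c}` supports the convex set `C`: it meets `C` and `C` lies in
one of the two closed half-spaces bounded by it. -/
def SupportsSet {d : ℕ} (ℓ : EuclideanSpace ℝ (Fin d)) (c : ℝ)
    (C : Set (EuclideanSpace ℝ (Fin d))) : Prop :=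
  (hyp ℓ c ∩ C).Nonempty ∧ ((∀ x ∈ C, ⟪ℓ, x⟫ ≤ c) ∨ (∀ x ∈ C, c ≤ ⟪ℓ, x⟫))

/-- Orthogonal projection onto the hyperplane `{v : ℓ·v = c}` (for `‖ℓ‖ = 1`). -/
def projHyp {d : ℕ} (ℓ : EuclideanSpace ℝ (Fin d)) (c : ℝ)
    (v : EuclideanSpace ℝ (Fin d)) : EuclideanSpace ℝ (Fin d) :=
  v + (c - ⟪ℓ, v⟫) • ℓ

/-- A face of a convex set: a convex subset `F ⊆ C` such that any closed segment of `C` having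
a relative interior point in `F` has both endpoints in `F`. -/
def IsFaceOf {V : Type*} [AddCommGroup V] [Module ℝ V] (C F : Set V) : Prop :=
  Convex ℝ F ∧ IsExtreme ℝ C F

/-- A maximal proper face of a convex set: a nonempty proper face contained in no face
other than `C` and itself. -/
def IsMaxProperFace {V : Type*} [AddCommGroup V] [Module ℝ V] (C F : Set V) : Prop :=
  IsFaceOf C F ∧ F.Nonempty ∧ F ≠ C ∧
    ∀ F', IsFaceOf C F' → F'.Nonempty → F ⊆ F' → F' = C ∨ F' = F

/-- `F*₊(C_X)`: the maximal proper faces of the convex support carrying positive probability. -/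
def facesPlus {d : ℕ} (μ : Measure (EuclideanSpace ℝ (Fin d))) :
    Set (Set (EuclideanSpace ℝ (Fin d))) :=
  {C | IsMaxProperFace (convSupp μ) C ∧ 0 < μ C}

/-- `K_X` is steep: `|∇K_X(u_n)| → ∞` along every sequence in the interior of `D(K_X)`
converging to a boundary point of `D(K_X)`. -/
def Steep {d : ℕ} (μ : Measure (EuclideanSpace ℝ (Fin d))) : Prop :=
  ∀ (u : ℕ → EuclideanSpace ℝ (Fin d)) (u₀ : EuclideanSpace ℝ (Fin d)),
    (∀ n, u n ∈ interior (edom (logLaplace μ))) → Tendsto u atTop (𝓝 u₀) →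
    u₀ ∈ frontier (edom (logLaplace μ)) →
    Tendsto (fun n => ‖gradient (fun w => (logLaplace μ w).toReal) (u n)‖) atTop atTop

/-- Condition (a) of the projection property: for every hyperplane `L` supporting `C_X` with
`0 < P(X ∈ L) < 1`, the projections on `L` of the relative interiors of `D(K_X)` and
`D(K_{X|L})` coincide. -/
def CondA {d : ℕ} (μ : Measure (EuclideanSpace ℝ (Fin d))) : Prop :=
  ∀ (ℓ : EuclideanSpace ℝ (Fin d)) (c : ℝ), ‖ℓ‖ = 1 → SupportsSet ℓ c (convSupp μ) →
    0 < μ (hyp ℓ c) → μ (hyp ℓ c) < 1 →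
    projHyp ℓ c '' intrinsicInterior ℝ (edom (logLaplace μ)) =
      projHyp ℓ c '' intrinsicInterior ℝ (edom (logLaplace (μ[|hyp ℓ c])))

/-- Depth-`n` truncation of the (well-founded) recursive definition of the projection property. -/
def ProjPropN {d : ℕ} : ℕ → Measure (EuclideanSpace ℝ (Fin d)) → Prop
  | 0, μ => CondA μ
  | n + 1, μ => CondA μ ∧ ∀ C ∈ facesPlus μ, ProjPropN n (μ[|C])

/-- `K_X` has the projection property: condition (a) holds, and `K_{X|C}` has the projection
property for every `C ∈ F*₊(C_X)`. (The recursion on the dimension of `C_X` terminates in at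
most `d` steps, so this is equivalent to all finite-depth truncations holding.) -/
def ProjProp {d : ℕ} (μ : Measure (EuclideanSpace ℝ (Fin d))) : Prop :=
  ∀ n, ProjPropN n μ

/-- Depth-`n` truncation of the recursive definition of total steepness. -/
def TotallySteepN {d : ℕ} : ℕ → Measure (EuclideanSpace ℝ (Fin d)) → Prop
  | 0, μ => Steep μ
  | n + 1, μ => Steep μ ∧ ∀ C ∈ facesPlus μ, TotallySteepN n (μ[|C])

/-- `K_X` is totally steep: `K_X` is steep and `K_{X|C}` is totally steep for every
`C ∈ F*₊(C_X)`. -/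
def TotallySteep {d : ℕ} (μ : Measure (EuclideanSpace ℝ (Fin d))) : Prop :=
  ∀ n, TotallySteepN n μ

/-- `f` is strictly convex on `A`: `f` is affine on no nondegenerate segment contained in `A`. -/
def StrictlyConvexOnSet {d : ℕ} (f : EuclideanSpace ℝ (Fin d) → EReal)
    (A : Set (EuclideanSpace ℝ (Fin d))) : Prop :=
  ∀ x y : EuclideanSpace ℝ (Fin d), segment ℝ x y ⊆ A → x ≠ y →
    ¬ ∀ t : ℝ, t ∈ Icc (0 : ℝ) 1 →
      f ((1 - t) • x + t • y) = ((1 - t : ℝ) : EReal) * f x + ((t : ℝ) : EReal) * f y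

/-! ### Relative interiors of convex sets -/

section RelativeInterior

variable {V : Type*} [NormedAddCommGroup V] [NormedSpace ℝ V] {C : Set V} {x y : V}

theorem mem_rint_iff :
    x ∈ intrinsicInterior ℝ C ↔
      x ∈ C ∧ ∃ r > 0, ∀ w ∈ affineSpan ℝ C, dist w x < r → w ∈ C := by
  rw [mem_intrinsicInterior]
  constructor
  · rintro ⟨y, hy, rfl⟩
    refine ⟨(interior_subset hy : y ∈ ((↑) ⁻¹' C : Set (affineSpan ℝ C))), ?_⟩
    rw [mem_interior_iff_mem_nhds, Metric.mem_nhds_iff] at hy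
    obtain ⟨r, hr, h⟩ := hy
    exact ⟨r, hr, fun w hw hd => h (show (⟨w, hw⟩ : affineSpan ℝ C) ∈ Metric.ball y r from hd)⟩
  · rintro ⟨hx, r, hr, h⟩
    refine ⟨⟨x, subset_affineSpan ℝ C hx⟩, ?_, rfl⟩
    rw [mem_interior_iff_mem_nhds, Metric.mem_nhds_iff]
    exact ⟨r, hr, fun w hw => h w w.2 hw⟩

/-- The affine hull of `C` contains every affine combination of two of its points. -/
theorem combo_mem_affineSpan {C : Set V} {x y : V} (hx : x ∈ affineSpan ℝ C)
    (hy : y ∈ affineSpan ℝ C) {a b : ℝ} (hab : a + b = 1) :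
    a • x + b • y ∈ affineSpan ℝ C := by
  have h := AffineMap.lineMap_mem b hx hy
  rw [AffineMap.lineMap_apply_module] at h
  rwa [show a = 1 - b by linarith]

/-- A relative interior point can be prolonged slightly beyond itself, away from any point
of the set. -/
theorem rint_prolong (hx : x ∈ intrinsicInterior ℝ C) (hy : y ∈ C) :
    ∃ ε : ℝ, 0 < ε ∧ x + ε • (x - y) ∈ C := by
  obtain ⟨hxC, r, hr, h⟩ := mem_rint_iff.1 hx
  have hpos : 0 < ‖x - y‖ + 1 := by positivity
  refine ⟨r / (‖x - y‖ + 1), by positivity, h _ ?_ ?_⟩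
  · have := combo_mem_affineSpan (subset_affineSpan ℝ C hxC) (subset_affineSpan ℝ C hy)
      (a := 1 + r / (‖x - y‖ + 1)) (b := -(r / (‖x - y‖ + 1))) (by ring)
    convert this using 1
    module
  · rw [dist_eq_norm, add_sub_cancel_left, norm_smul, Real.norm_of_nonneg (by positivity),
      div_mul_eq_mul_div, div_lt_iff₀ hpos]
    nlinarith

variable [FiniteDimensional ℝ V]

/-- The half-open segment from a relative interior point to a point of the closure stays in the
relative interior. -/
theorem combo_rint_closure (hC : Convex ℝ C) (hx : x ∈ intrinsicInterior ℝ C)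
    (hy : y ∈ closure C) {a b : ℝ} (ha : 0 < a) (hb : 0 ≤ b) (hab : a + b = 1) :
    a • x + b • y ∈ intrinsicInterior ℝ C := by
  obtain ⟨hxC, r, hr, h⟩ := mem_rint_iff.1 hx
  have hyA : y ∈ affineSpan ℝ C :=
    closure_minimal (subset_affineSpan ℝ C) (AffineSubspace.closed_of_finiteDimensional _) hy
  obtain ⟨y', hy', hd⟩ := Metric.mem_closure_iff.1 hy (a * r / 2) (by positivity)
  -- A point `w` near `a • x + b • y` is the combination of `y'` and a point near `x`.
  have key : ∀ w ∈ affineSpan ℝ C, dist w (a • x + b • y) < a * r / 2 → w ∈ C := by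
    intro w hw hdw
    have hx' : a⁻¹ • w + (-(a⁻¹ * b)) • y' ∈ C := by
      refine h _ (combo_mem_affineSpan hw (subset_affineSpan ℝ C hy') ?_) ?_
      · field_simp; linarith
      · have e : a⁻¹ • w + (-(a⁻¹ * b)) • y' - x
            = a⁻¹ • ((w - (a • x + b • y)) + b • (y - y')) := by
          have : x = a⁻¹ • a • x := by rw [smul_smul, inv_mul_cancel₀ ha.ne', one_smul]
          nth_rewrite 1 [this]
          module
        rw [dist_eq_norm] at hd hdw
        rw [dist_eq_norm, e, norm_smul, Real.norm_of_nonneg (by positivity),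
          inv_mul_lt_iff₀ ha]
        refine (norm_add_le _ _).trans_lt ?_
        rw [norm_smul, Real.norm_of_nonneg hb]
        have hb1 : b ≤ 1 := by linarith
        nlinarith [norm_nonneg (y - y')]
    have := hC hx' hy' ha.le hb hab
    convert this using 1
    rw [smul_add, smul_smul, smul_smul, mul_inv_cancel₀ ha.ne', one_smul, add_assoc, ← add_smul,
      show a * -(a⁻¹ * b) + b = 0 by field_simp; ring, zero_smul, add_zero]
  refine mem_rint_iff.2 ⟨key _ ?_ ?_, a * r / 2, by positivity, key⟩
  · exact combo_mem_affineSpan (subset_affineSpan ℝ C hxC) hyA hab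
  · rw [dist_self]; positivity

theorem rint_of_prolong_closure (hC : Convex ℝ C) (hy : y ∈ intrinsicInterior ℝ C) {ε : ℝ}
    (hε : 0 < ε) (h : x + ε • (x - y) ∈ closure C) : x ∈ intrinsicInterior ℝ C := by
  have h1 : (1 + ε) ≠ 0 := by positivity
  have := combo_rint_closure hC hy h (a := ε / (1 + ε)) (b := 1 / (1 + ε)) (by positivity)
    (by positivity) (by field_simp; ring)
  convert this using 1
  have e : x = (1 / (1 + ε) + 1 / (1 + ε) * ε) • x := by
    rw [show 1 / (1 + ε) + 1 / (1 + ε) * ε = 1 by field_simp, one_smul]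
  nth_rewrite 1 [e]
  module

/-- For `A` and `D` convex, if `U = A + ℝℓ` is contained and dense in `D`, then `A` and `D` have
the same relative interior modulo `ℝℓ`. -/
theorem rint_shift (ℓ : V) {A D U : Set V} (hA : Convex ℝ A) (hD : Convex ℝ D)
    (hU : Convex ℝ U) (hne : A.Nonempty) (hUA : ∀ u, u ∈ U ↔ ∃ t : ℝ, u + t • ℓ ∈ A)
    (hUD : U ⊆ D) (hDU : D ⊆ closure U) :
    intrinsicInterior ℝ A ⊆ intrinsicInterior ℝ D ∧
      ∀ z ∈ intrinsicInterior ℝ D, ∃ t : ℝ, z + t • ℓ ∈ intrinsicInterior ℝ A := by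
  have hAU : A ⊆ U := fun x hx => (hUA x).2 ⟨0, by simpa using hx⟩
  obtain ⟨u₀, hu₀⟩ := (hne.mono hAU).intrinsicInterior hU
  obtain ⟨a₀, ha₀⟩ := hne.intrinsicInterior hA
  obtain ⟨d₀, hd₀⟩ := (hne.mono (hAU.trans hUD)).intrinsicInterior hD
  have rDU : intrinsicInterior ℝ D ⊆ intrinsicInterior ℝ U := by
    intro x hx
    obtain ⟨ε, hε, h⟩ := rint_prolong hx (hUD (intrinsicInterior_subset hu₀))
    exact rint_of_prolong_closure hU hu₀ hε (hDU h)
  constructor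
  · intro x hx
    have hxU : x ∈ intrinsicInterior ℝ U := by
      obtain ⟨t, ht⟩ := (hUA u₀).1 (intrinsicInterior_subset hu₀)
      obtain ⟨ε, hε, h⟩ := rint_prolong hx ht
      refine rint_of_prolong_closure hU hu₀ hε (subset_closure ((hUA _).2 ⟨-(ε * t), ?_⟩))
      convert h using 1
      module
    obtain ⟨ε, hε, h⟩ := rint_prolong hxU (intrinsicInterior_subset (rDU hd₀))
    exact rint_of_prolong_closure hD hd₀ hε (subset_closure (hUD h))
  · intro z hz
    obtain ⟨ε, hε, h⟩ := rint_prolong (rDU hz) (hAU (intrinsicInterior_subset ha₀))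
    obtain ⟨t, ht⟩ := (hUA _).1 h
    have h1 : (1 + ε) ≠ 0 := by positivity
    refine ⟨t / (1 + ε), rint_of_prolong_closure hA ha₀ hε (subset_closure ?_)⟩
    convert ht using 1
    have e : t • ℓ = ((1 + ε) * (t / (1 + ε))) • ℓ := by rw [mul_div_cancel₀ _ h1]
    rw [e]
    module

end RelativeInterior

/-! ### Laplace transforms -/

section Laplace

variable {d : ℕ}

/-- The Laplace transform `E[exp(u·X)]` of a measure, with values in `[0, +∞]`. -/
def laplace (μ : Measure (EuclideanSpace ℝ (Fin d)))
    (u : EuclideanSpace ℝ (Fin d)) : ℝ≥0∞ :=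
  ∫⁻ x, ENNReal.ofReal (Real.exp ⟪u, x⟫) ∂μ

theorem mem_edom_logLaplace (μ : Measure (EuclideanSpace ℝ (Fin d)))
    (u : EuclideanSpace ℝ (Fin d)) : u ∈ edom (logLaplace μ) ↔ laplace μ u < ⊤ := by
  simp [edom, logLaplace, laplace]

theorem laplace_combo_le (μ : Measure (EuclideanSpace ℝ (Fin d)))
    (u w : EuclideanSpace ℝ (Fin d)) {a b : ℝ} (ha : 0 ≤ a) (hb : 0 ≤ b) (hab : a + b = 1) :
    laplace μ (a • u + b • w) ≤ ENNReal.ofReal a * laplace μ u + ENNReal.ofReal b * laplace μ w := by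
  unfold laplace
  rw [← lintegral_const_mul _ (by fun_prop), ← lintegral_const_mul _ (by fun_prop),
    ← lintegral_add_left (by fun_prop)]
  refine lintegral_mono fun x => ?_
  rw [← ENNReal.ofReal_mul ha, ← ENNReal.ofReal_mul hb,
    ← ENNReal.ofReal_add (by positivity) (by positivity)]
  refine ENNReal.ofReal_le_ofReal ?_
  rw [inner_add_left, real_inner_smul_left, real_inner_smul_left]
  exact convexOn_exp.2 (mem_univ _) (mem_univ _) ha hb hab

theorem convex_edom (μ : Measure (EuclideanSpace ℝ (Fin d))) :
    Convex ℝ (edom (logLaplace μ)) := by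
  intro u hu w hw a b ha hb hab
  rw [mem_edom_logLaplace] at *
  refine (laplace_combo_le μ u w ha hb hab).trans_lt ?_
  exact ENNReal.add_lt_top.2 ⟨ENNReal.mul_lt_top ENNReal.ofReal_lt_top hu,
    ENNReal.mul_lt_top ENNReal.ofReal_lt_top hw⟩

theorem coe_le_log_iff (x : ℝ) (M : ℝ≥0∞) :
    (x : EReal) ≤ M.log ↔ ENNReal.ofReal (Real.exp x) ≤ M := by
  rw [← ENNReal.log_le_log_iff, ENNReal.log_ofReal_of_pos (Real.exp_pos x), Real.log_exp]

/-- Sublevel sets of the rate function, expressed without logarithms. -/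
theorem rateFn_le_iff (μ : Measure (EuclideanSpace ℝ (Fin d)))
    (v : EuclideanSpace ℝ (Fin d)) (a : ℝ) :
    rateFn μ v ≤ a ↔ ∀ u, ENNReal.ofReal (Real.exp (⟪u, v⟫ - a)) ≤ laplace μ u := by
  unfold rateFn
  rw [iSup_le_iff]
  refine forall_congr' fun u => ?_
  rw [EReal.sub_le_iff_le_add (.inr (EReal.coe_ne_top a)) (.inr (EReal.coe_ne_bot a)),
    ← coe_le_log_iff, EReal.coe_sub,
    EReal.sub_le_iff_le_add (.inl (EReal.coe_ne_bot a)) (.inl (EReal.coe_ne_top a)),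
    add_comm]
  rfl

theorem ereal_eq_iff_forall_le_coe (x y : EReal) :
    x = y ↔ ∀ a : ℝ, x ≤ a ↔ y ≤ a := by
  constructor
  · rintro rfl a; rfl
  · intro h
    refine le_antisymm ?_ ?_
    · exact EReal.le_of_forall_lt_iff_le.1 fun z hz => (h z).2 hz.le
    · exact EReal.le_of_forall_lt_iff_le.1 fun z hz => (h z).1 hz.le

theorem measurableSet_hyp (ℓ : EuclideanSpace ℝ (Fin d)) (c : ℝ) : MeasurableSet (hyp ℓ c) :=
  (isClosed_eq (by fun_prop) continuous_const).measurableSet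

theorem laplace_cond (μ : Measure (EuclideanSpace ℝ (Fin d)))
    (s : Set (EuclideanSpace ℝ (Fin d))) (u : EuclideanSpace ℝ (Fin d)) :
    laplace (μ[|s]) u = (μ s)⁻¹ * laplace (μ.restrict s) u := by
  simp [laplace, ProbabilityTheory.cond, lintegral_smul_measure]

theorem edom_cond (μ : Measure (EuclideanSpace ℝ (Fin d))) [IsFiniteMeasure μ]
    (s : Set (EuclideanSpace ℝ (Fin d))) (h0 : 0 < μ s) :
    edom (logLaplace (μ[|s])) = edom (logLaplace (μ.restrict s)) := by
  ext u
  rw [mem_edom_logLaplace, mem_edom_logLaplace, laplace_cond]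
  have h1 : (μ s)⁻¹ ≠ 0 := by simp
  have h2 : (μ s)⁻¹ ≠ ⊤ := by simpa using h0.ne'
  simp only [lt_top_iff_ne_top, ne_eq, ENNReal.mul_eq_top, h1, h2, not_false_eq_true, true_and,
    false_and, or_false]

/-- The right-hand side `I_{X|L}(v) - log P(X ∈ L)` is the conjugate of the logarithm of the
unnormalised transform `E[exp(u·X); X ∈ L]`. -/
theorem rateFn_cond_sub_log_le_iff (μ : Measure (EuclideanSpace ℝ (Fin d))) [IsFiniteMeasure μ]
    (s : Set (EuclideanSpace ℝ (Fin d))) (h0 : 0 < μ s) (v : EuclideanSpace ℝ (Fin d)) (a : ℝ) :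
    rateFn (μ[|s]) v - (μ s).log ≤ a ↔
      ∀ u, ENNReal.ofReal (Real.exp (⟪u, v⟫ - a)) ≤ laplace (μ.restrict s) u := by
  have htop : μ s ≠ ⊤ := measure_ne_top μ s
  have hne : μ s ≠ 0 := h0.ne'
  have hp : 0 < (μ s).toReal := ENNReal.toReal_pos h0.ne' htop
  rw [ENNReal.log_pos_real h0.ne' htop,
    EReal.sub_le_iff_le_add (.inl (EReal.coe_ne_bot _)) (.inl (EReal.coe_ne_top _)),
    ← EReal.coe_add, rateFn_le_iff]
  refine forall_congr' fun u => ?_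
  rw [laplace_cond, ← sub_sub, Real.exp_sub, Real.exp_log hp, ENNReal.ofReal_div_of_pos hp,
    ENNReal.ofReal_toReal htop, div_eq_mul_inv, mul_comm,
    ENNReal.mul_le_mul_iff_right (by simp) (by simpa using hne)]

/-- `E[exp(u·X); X ∈ L] ≤ exp(-t c) E[exp((u + tℓ)·X)]`. -/
theorem laplace_restrict_le (μ : Measure (EuclideanSpace ℝ (Fin d)))
    (ℓ : EuclideanSpace ℝ (Fin d)) (c : ℝ) (u : EuclideanSpace ℝ (Fin d)) (t : ℝ) :
    laplace (μ.restrict (hyp ℓ c)) u ≤ ENNReal.ofReal (Real.exp (-(t * c))) *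
      laplace μ (u + t • ℓ) := by
  unfold laplace
  rw [← lintegral_const_mul _ (by fun_prop)]
  refine le_trans (le_of_eq ?_) (setLIntegral_le_lintegral (hyp ℓ c) _)
  refine setLIntegral_congr_fun (measurableSet_hyp ℓ c) fun x hx => ?_
  have hx' : ⟪ℓ, x⟫ = c := hx
  rw [← ENNReal.ofReal_mul (Real.exp_pos _).le, ← Real.exp_add, inner_add_left,
    real_inner_smul_left, hx']
  congr 2; ring

/-- Tilting in the outward normal direction concentrates the measure on the supporting
hyperplane. -/
theorem tendsto_laplace (μ : Measure (EuclideanSpace ℝ (Fin d)))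
    (ℓ : EuclideanSpace ℝ (Fin d)) (c : ℝ) (hae : ∀ᵐ x ∂μ, ⟪ℓ, x⟫ ≤ c)
    (u : EuclideanSpace ℝ (Fin d)) (t₀ : ℝ) (hfin : laplace μ (u + t₀ • ℓ) < ⊤) :
    Tendsto (fun t : ℝ => ENNReal.ofReal (Real.exp (-(t * c))) * laplace μ (u + t • ℓ)) atTop
      (𝓝 (laplace (μ.restrict (hyp ℓ c)) u)) := by
  have e : ∀ t : ℝ, ENNReal.ofReal (Real.exp (-(t * c))) * laplace μ (u + t • ℓ) =
      ∫⁻ x, ENNReal.ofReal (Real.exp (⟪u, x⟫ + t * (⟪ℓ, x⟫ - c))) ∂μ := by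
    intro t
    unfold laplace
    rw [← lintegral_const_mul _ (by fun_prop)]
    refine lintegral_congr fun x => ?_
    rw [← ENNReal.ofReal_mul (Real.exp_pos _).le, ← Real.exp_add, inner_add_left,
      real_inner_smul_left]
    congr 2; ring
  simp_rw [e]
  unfold laplace
  rw [← lintegral_indicator (measurableSet_hyp ℓ c)]
  refine tendsto_lintegral_filter_of_dominated_convergence
    (fun x => ENNReal.ofReal (Real.exp (⟪u, x⟫ + t₀ * (⟪ℓ, x⟫ - c)))) ?_ ?_ ?_ ?_
  · exact Eventually.of_forall fun t => by fun_prop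
  · filter_upwards [eventually_ge_atTop t₀] with t ht
    filter_upwards [hae] with x hx
    refine ENNReal.ofReal_le_ofReal (Real.exp_le_exp.2 ?_)
    nlinarith
  · rw [← e]
    exact (ENNReal.mul_lt_top ENNReal.ofReal_lt_top hfin).ne
  · filter_upwards [hae] with x hx
    by_cases hxL : x ∈ hyp ℓ c
    · have hx' : ⟪ℓ, x⟫ = c := hxL
      simp [indicator_of_mem hxL, hx']
    · rw [indicator_of_notMem hxL]
      have hlt : ⟪ℓ, x⟫ - c < 0 := sub_neg.2 (lt_of_le_of_ne hx hxL)
      have : Tendsto (fun t : ℝ => Real.exp (⟪u, x⟫ + t * (⟪ℓ, x⟫ - c))) atTop (𝓝 0) :=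
        Real.tendsto_exp_atBot.comp (tendsto_atBot_add_const_left _ _
          (tendsto_id.atTop_mul_const_of_neg hlt))
      simpa using ENNReal.tendsto_ofReal this

/-- On the hyperplane `L`, the rate function of `X` is the conjugate of
`u ↦ log E[exp(u·X); X ∈ L]` restricted to `D(K_X) + ℝℓ`. -/
theorem rateFn_le_iff_of_mem_hyp (μ : Measure (EuclideanSpace ℝ (Fin d)))
    (ℓ : EuclideanSpace ℝ (Fin d)) (c : ℝ) (hae : ∀ᵐ x ∂μ, ⟪ℓ, x⟫ ≤ c)
    (v : EuclideanSpace ℝ (Fin d)) (hv : v ∈ hyp ℓ c) (a : ℝ) :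
    rateFn μ v ≤ a ↔ ∀ u, (∃ t : ℝ, u + t • ℓ ∈ edom (logLaplace μ)) →
      ENNReal.ofReal (Real.exp (⟪u, v⟫ - a)) ≤ laplace (μ.restrict (hyp ℓ c)) u := by
  rw [rateFn_le_iff]
  constructor
  · rintro h u ⟨t, ht⟩
    rw [mem_edom_logLaplace] at ht
    refine ge_of_tendsto' (tendsto_laplace μ ℓ c hae u t ht) fun s => ?_
    refine le_trans (le_of_eq ?_) (mul_le_mul_right (h (u + s • ℓ)) _)
    have hv' : ⟪ℓ, v⟫ = c := hv
    rw [← ENNReal.ofReal_mul (Real.exp_pos _).le, ← Real.exp_add, inner_add_left,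
      real_inner_smul_left, hv']
    congr 2; ring
  · intro h u
    by_cases hu : laplace μ u < ⊤
    · refine (h u ⟨0, by simpa [mem_edom_logLaplace] using hu⟩).trans ?_
      simpa using laplace_restrict_le μ ℓ c u 0
    · rw [not_lt_top_iff.1 hu]; exact le_top

/-- The rate function of a nonzero finite measure on a hyperplane is finite somewhere on the
hyperplane: by Jensen's inequality, at the barycentre of the restriction to a large ball. -/
theorem exists_rate_point (μ : Measure (EuclideanSpace ℝ (Fin d))) [IsFiniteMeasure μ]
    (ℓ : EuclideanSpace ℝ (Fin d)) (c : ℝ) (h0 : 0 < μ (hyp ℓ c)) :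
    ∃ v ∈ hyp ℓ c, ∃ a : ℝ, ∀ u,
      ENNReal.ofReal (Real.exp (⟪u, v⟫ - a)) ≤ laplace (μ.restrict (hyp ℓ c)) u := by
  obtain ⟨n, hn⟩ : ∃ n : ℕ, 0 < μ (hyp ℓ c ∩ Metric.ball 0 n) := by
    by_contra! hcon
    have : μ (⋃ n : ℕ, hyp ℓ c ∩ Metric.ball 0 n) = 0 :=
      measure_iUnion_null fun n => le_antisymm (hcon n) bot_le
    rw [← inter_iUnion, Metric.iUnion_ball_nat, inter_univ] at this
    exact h0.ne' this
  set B := hyp ℓ c ∩ Metric.ball (0 : EuclideanSpace ℝ (Fin d)) n with hB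
  have hBm : MeasurableSet B := (measurableSet_hyp ℓ c).inter measurableSet_ball
  have htop : μ B ≠ ⊤ := measure_ne_top μ B
  have hp : 0 < (μ B).toReal := ENNReal.toReal_pos hn.ne' htop
  have : IsProbabilityMeasure (μ[|B]) := cond_isProbabilityMeasure hn.ne'
  have haeB : ∀ᵐ x ∂(μ[|B]), x ∈ B := ae_cond_mem hBm
  have hint : Integrable (fun x : EuclideanSpace ℝ (Fin d) => x) (μ[|B]) := by
    refine Integrable.of_bound (by fun_prop) (n : ℝ) ?_
    filter_upwards [haeB] with x hx
    simpa using (mem_ball_zero_iff.1 hx.2).le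
  refine ⟨∫ x, x ∂(μ[|B]), ?_, -Real.log (μ B).toReal, fun u => ?_⟩
  · change ⟪ℓ, ∫ x, x ∂(μ[|B])⟫ = c
    rw [← integral_inner hint]
    rw [integral_congr_ae (g := fun _ => c)]
    · simp
    · filter_upwards [haeB] with x hx using hx.1
  · have hexp : Integrable (fun x => Real.exp ⟪u, x⟫) (μ[|B]) := by
      refine Integrable.of_bound (by fun_prop) (Real.exp (‖u‖ * n)) ?_
      filter_upwards [haeB] with x hx
      rw [Real.norm_of_nonneg (Real.exp_pos _).le]
      refine Real.exp_le_exp.2 ((real_inner_le_norm u x).trans ?_)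
      have := (mem_ball_zero_iff.1 hx.2).le
      gcongr
    have hJ : Real.exp ⟪u, ∫ x, x ∂(μ[|B])⟫ ≤ ∫ x, Real.exp ⟪u, x⟫ ∂(μ[|B]) := by
      rw [← integral_inner hint]
      exact convexOn_exp.map_integral_le Real.continuous_exp.continuousOn isClosed_univ
        (by simp) (hint.const_inner u) hexp
    have h2 : ENNReal.ofReal (Real.exp ⟪u, ∫ x, x ∂(μ[|B])⟫) ≤ laplace (μ[|B]) u := by
      refine (ENNReal.ofReal_le_ofReal hJ).trans (le_of_eq ?_)
      exact ofReal_integral_eq_lintegral_ofReal hexp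
        (Eventually.of_forall fun x => (Real.exp_pos _).le)
    have h3 : laplace (μ.restrict B) u ≤ laplace (μ.restrict (hyp ℓ c)) u :=
      lintegral_mono' (Measure.restrict_mono inter_subset_left le_rfl) le_rfl
    refine le_trans ?_ h3
    rw [laplace_cond] at h2
    rw [sub_neg_eq_add, Real.exp_add, Real.exp_log hp, mul_comm, ENNReal.ofReal_mul hp.le,
      ENNReal.ofReal_toReal htop]
    refine (mul_le_mul_right h2 _).trans (le_of_eq ?_)
    rw [← mul_assoc, ENNReal.mul_inv_cancel hn.ne' htop, one_mul]

end Laplace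

/-! ### The equivalence -/

section Equivalence

variable {d : ℕ}

theorem projHyp_add_smul (ℓ : EuclideanSpace ℝ (Fin d)) (c : ℝ) (hℓ : ‖ℓ‖ = 1)
    (x : EuclideanSpace ℝ (Fin d)) (t : ℝ) : projHyp ℓ c (x + t • ℓ) = projHyp ℓ c x := by
  unfold projHyp
  rw [inner_add_right, real_inner_smul_right, real_inner_self_eq_norm_sq, hℓ]
  module

theorem exists_of_projHyp_eq (ℓ : EuclideanSpace ℝ (Fin d)) (c : ℝ)
    {x y : EuclideanSpace ℝ (Fin d)} (h : projHyp ℓ c x = projHyp ℓ c y) :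
    ∃ t : ℝ, y + t • ℓ = x := by
  unfold projHyp at h
  refine ⟨(c - ⟪ℓ, y⟫) - (c - ⟪ℓ, x⟫), ?_⟩
  rw [sub_smul, ← add_sub_assoc, ← h]
  abel

/-- If the conjugates of `log E[exp(u·X); X ∈ L]` and of its restriction to `D(K_X) + ℝℓ`
agree on `L`, then `D(K_X) + ℝℓ` is dense in `D(K_{X|L})`. -/
theorem edom_subset_closure (μ : Measure (EuclideanSpace ℝ (Fin d))) [IsFiniteMeasure μ]
    (ℓ : EuclideanSpace ℝ (Fin d)) (c : ℝ) (h0 : 0 < μ (hyp ℓ c))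
    {U : Set (EuclideanSpace ℝ (Fin d))} (hU : Convex ℝ U) (hUne : U.Nonempty)
    (hUinv : ∀ u ∈ U, ∀ t : ℝ, u + t • ℓ ∈ U)
    (h : ∀ v ∈ hyp ℓ c, ∀ a : ℝ,
      (∀ u ∈ U, ENNReal.ofReal (Real.exp (⟪u, v⟫ - a)) ≤ laplace (μ.restrict (hyp ℓ c)) u) →
      ∀ u, ENNReal.ofReal (Real.exp (⟪u, v⟫ - a)) ≤ laplace (μ.restrict (hyp ℓ c)) u) :
    edom (logLaplace (μ.restrict (hyp ℓ c))) ⊆ closure U := by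
  intro w hw
  by_contra hwU
  rw [mem_edom_logLaplace] at hw
  obtain ⟨f, α, hf, hα⟩ := geometric_hahn_banach_closed_point hU.closure isClosed_closure hwU
  set b := (InnerProductSpace.toDual ℝ (EuclideanSpace ℝ (Fin d))).symm f with hb
  have hfb : ∀ x, f x = ⟪x, b⟫ := by
    intro x
    rw [real_inner_comm, hb, InnerProductSpace.toDual_symm_apply]
  -- The separating functional is bounded above on the lines `u + ℝℓ ⊆ U`, hence kills `ℓ`.
  have hbℓ : ⟪ℓ, b⟫ = 0 := by
    by_contra hne
    obtain ⟨u, hu⟩ := hUne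
    have := hf _ (subset_closure (hUinv u hu ((α - f u) / ⟪ℓ, b⟫)))
    rw [map_add, map_smul, hfb ℓ, smul_eq_mul, div_mul_cancel₀ _ hne] at this
    linarith
  obtain ⟨v₀, hv₀, a₀, hva⟩ := exists_rate_point μ ℓ c h0
  have hv₀' : ⟪ℓ, v₀⟫ = c := hv₀
  have key : ∀ n : ℕ, Real.exp ((⟪w, v₀⟫ - a₀) + n * (f w - α)) ≤
      (laplace (μ.restrict (hyp ℓ c)) w).toReal := by
    intro n
    have := h (v₀ + (n : ℝ) • b)
      (by simp [hyp, inner_add_right, real_inner_smul_right, hbℓ, hv₀']) (a₀ + n * α) ?_ w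
    · rw [inner_add_right, real_inner_smul_right, ← hfb] at this
      refine (ENNReal.ofReal_le_iff_le_toReal hw.ne).1 (le_trans (le_of_eq ?_) this)
      congr 2; ring
    · intro u hu
      refine le_trans (ENNReal.ofReal_le_ofReal (Real.exp_le_exp.2 ?_)) (hva u)
      rw [inner_add_right, real_inner_smul_right, ← hfb]
      have := (hf u (subset_closure hu)).le
      have hn : (0 : ℝ) ≤ n := n.cast_nonneg
      nlinarith
  have hlim : Tendsto (fun n : ℕ => Real.exp ((⟪w, v₀⟫ - a₀) + n * (f w - α))) atTop atTop :=
    Real.tendsto_exp_atTop.comp (tendsto_atTop_add_const_left _ _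
      (tendsto_natCast_atTop_atTop.atTop_mul_const (sub_pos.2 hα)))
  obtain ⟨n, hn⟩ := (hlim.eventually_gt_atTop _).exists
  exact absurd (key n) (not_le.2 hn)

/-- A bound on the relative interior of the domain extends radially to the whole domain, by
convexity of the Laplace transform. -/
theorem bound_of_bound_rint (ν : Measure (EuclideanSpace ℝ (Fin d)))
    (v : EuclideanSpace ℝ (Fin d)) (a : ℝ) (hne : (edom (logLaplace ν)).Nonempty)
    (h : ∀ u ∈ intrinsicInterior ℝ (edom (logLaplace ν)),
      ENNReal.ofReal (Real.exp (⟪u, v⟫ - a)) ≤ laplace ν u)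
    (w : EuclideanSpace ℝ (Fin d)) :
    ENNReal.ofReal (Real.exp (⟪w, v⟫ - a)) ≤ laplace ν w := by
  by_cases hw : laplace ν w < ⊤
  swap
  · rw [not_lt_top_iff.1 hw]; exact le_top
  obtain ⟨w₀, hw₀⟩ := hne.intrinsicInterior (convex_edom ν)
  have hw₀fin : laplace ν w₀ ≠ ⊤ :=
    ((mem_edom_logLaplace ν w₀).1 (intrinsicInterior_subset hw₀)).ne
  have hl : Tendsto (fun s : ℝ => ENNReal.ofReal (Real.exp (⟪s • w₀ + (1 - s) • w, v⟫ - a)))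
      (𝓝[>] 0) (𝓝 (ENNReal.ofReal (Real.exp (⟪w, v⟫ - a)))) := by
    have : Continuous fun s : ℝ =>
        ENNReal.ofReal (Real.exp (⟪s • w₀ + (1 - s) • w, v⟫ - a)) :=
      ENNReal.continuous_ofReal.comp (by fun_prop)
    simpa using (this.tendsto 0).mono_left nhdsWithin_le_nhds
  have hr : Tendsto (fun s : ℝ => ENNReal.ofReal s * laplace ν w₀ +
      ENNReal.ofReal (1 - s) * laplace ν w) (𝓝[>] 0) (𝓝 (laplace ν w)) := by
    have : Continuous fun s : ℝ => ENNReal.ofReal s * laplace ν w₀ +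
        ENNReal.ofReal (1 - s) * laplace ν w :=
      ((ENNReal.continuous_mul_const hw₀fin).comp ENNReal.continuous_ofReal).add
        ((ENNReal.continuous_mul_const hw.ne).comp
          (ENNReal.continuous_ofReal.comp (continuous_const.sub continuous_id)))
    simpa using (this.tendsto 0).mono_left nhdsWithin_le_nhds
  refine le_of_tendsto_of_tendsto hl hr ?_
  filter_upwards [Ioo_mem_nhdsGT (zero_lt_one' ℝ)] with s hs
  refine (h _ ?_).trans (laplace_combo_le ν w₀ w hs.1.le (by linarith [hs.2]) (by ring))
  exact combo_rint_closure (convex_edom ν) hw₀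
    (subset_closure ((mem_edom_logLaplace ν w).2 hw)) hs.1 (by linarith [hs.2]) (by ring)

/-- The equivalence for a hyperplane with outward unit normal `ℓ`. -/
theorem rateFn_restrict_iff_of_ae_le (μ : Measure (EuclideanSpace ℝ (Fin d)))
    [IsProbabilityMeasure μ] (ℓ : EuclideanSpace ℝ (Fin d)) (c : ℝ) (hℓ : ‖ℓ‖ = 1)
    (hae : ∀ᵐ x ∂μ, ⟪ℓ, x⟫ ≤ c) (h0 : 0 < μ (hyp ℓ c)) :
    (∀ v ∈ hyp ℓ c, rateFn μ v = rateFn (μ[|hyp ℓ c]) v - (μ (hyp ℓ c)).log) ↔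
      projHyp ℓ c '' intrinsicInterior ℝ (edom (logLaplace μ)) =
        projHyp ℓ c '' intrinsicInterior ℝ (edom (logLaplace (μ[|hyp ℓ c]))) := by
  rw [edom_cond μ _ h0]
  simp_rw [ereal_eq_iff_forall_le_coe, rateFn_cond_sub_log_le_iff μ _ h0]
  set A := edom (logLaplace μ) with hA
  set ν := μ.restrict (hyp ℓ c) with hν
  set U : Set (EuclideanSpace ℝ (Fin d)) := {u | ∃ t : ℝ, u + t • ℓ ∈ A} with hUdef
  have hAne : A.Nonempty := ⟨0, by rw [hA, mem_edom_logLaplace]; simp [laplace]⟩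
  have hUA : ∀ u, u ∈ U ↔ ∃ t : ℝ, u + t • ℓ ∈ A := fun u => Iff.rfl
  have hAU : A ⊆ U := fun x hx => ⟨0, by simpa using hx⟩
  have hUconv : Convex ℝ U := by
    rintro x ⟨s, hs⟩ y ⟨t, ht⟩ p q hp hq hpq
    refine ⟨p * s + q * t, ?_⟩
    convert convex_edom μ hs ht hp hq hpq using 1
    module
  have hUinv : ∀ u ∈ U, ∀ t : ℝ, u + t • ℓ ∈ U := by
    rintro u ⟨s, hs⟩ t
    refine ⟨s - t, ?_⟩
    convert hs using 1
    module
  have hUD : U ⊆ edom (logLaplace ν) := by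
    rintro u ⟨t, ht⟩
    rw [hA, mem_edom_logLaplace] at ht
    rw [mem_edom_logLaplace]
    exact (laplace_restrict_le μ ℓ c u t).trans_lt
      (ENNReal.mul_lt_top ENNReal.ofReal_lt_top ht)
  constructor
  · intro h
    have hDU : edom (logLaplace ν) ⊆ closure U := by
      refine edom_subset_closure μ ℓ c h0 hUconv (hAne.mono hAU) hUinv fun v hv a hP => ?_
      exact (h v hv a).1 ((rateFn_le_iff_of_mem_hyp μ ℓ c hae v hv a).2 hP)
    obtain ⟨h1, h2⟩ := rint_shift ℓ (convex_edom μ) (convex_edom ν) hUconv hAne hUA hUD hDU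
    refine Subset.antisymm (image_mono h1) ?_
    rintro _ ⟨z, hz, rfl⟩
    obtain ⟨t, ht⟩ := h2 z hz
    exact ⟨_, ht, projHyp_add_smul ℓ c hℓ z t⟩
  · intro h v hv a
    rw [rateFn_le_iff_of_mem_hyp μ ℓ c hae v hv a]
    refine ⟨fun hP => bound_of_bound_rint ν v a (hAne.mono (hAU.trans hUD)) fun u hu => hP u ?_,
      fun hP u _ => hP u⟩
    obtain ⟨x, hx, hxu⟩ := h.symm.subset (mem_image_of_mem _ hu)
    obtain ⟨t, rfl⟩ := exists_of_projHyp_eq ℓ c hxu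
    exact ⟨t, intrinsicInterior_subset hx⟩

theorem ae_inner_le_of_convSupp (μ : Measure (EuclideanSpace ℝ (Fin d)))
    (ℓ : EuclideanSpace ℝ (Fin d)) (c : ℝ) (h : ∀ x ∈ convSupp μ, ⟪ℓ, x⟫ ≤ c) :
    ∀ᵐ x ∂μ, ⟪ℓ, x⟫ ≤ c := by
  refine measure_null_of_locally_null _ fun x hx => ?_
  have hx' : x ∉ msupp μ := fun hm => hx (h x (subset_convexHull ℝ _ hm))
  simp only [msupp, mem_ofPred_eq, not_forall, not_lt] at hx'
  obtain ⟨O, hO, hxO, hμ⟩ := hx'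
  exact ⟨O, mem_nhdsWithin_of_mem_nhds (hO.mem_nhds hxO), le_antisymm hμ bot_le⟩

end Equivalence

/-- **Theorem 1.** For a hyperplane `L` supporting `C_X` with `0 < P(X ∈ L) < 1`,
`I_X(v) = I_{X|L}(v) - log P(X ∈ L)` for all `v ∈ L` iff
`pr_L(rint D(K_X)) = pr_L(rint D(K_{X|L}))`. -/
theorem rateFn_restrict_iff_proj_eq {d : ℕ} (hd : 1 ≤ d)
    (μ : Measure (EuclideanSpace ℝ (Fin d))) [IsProbabilityMeasure μ]
    (ℓ : EuclideanSpace ℝ (Fin d)) (c : ℝ) (hℓ : ‖ℓ‖ = 1)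
    (hsupp : SupportsSet ℓ c (convSupp μ))
    (h0 : 0 < μ (hyp ℓ c)) (h1 : μ (hyp ℓ c) < 1) :
    (∀ v ∈ hyp ℓ c, rateFn μ v = rateFn (μ[|hyp ℓ c]) v - (μ (hyp ℓ c)).log) ↔
      projHyp ℓ c '' intrinsicInterior ℝ (edom (logLaplace μ)) =
        projHyp ℓ c '' intrinsicInterior ℝ (edom (logLaplace (μ[|hyp ℓ c]))) := by
  rcases hsupp.2 with h | h
  · exact rateFn_restrict_iff_of_ae_le μ ℓ c hℓ (ae_inner_le_of_convSupp μ ℓ c h) h0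
  · -- The data attached to `(ℓ, c)` only depend on the pair up to sign.
    have hhyp : hyp (-ℓ) (-c) = hyp ℓ c := by ext x; simp [hyp]
    have hproj : projHyp (-ℓ) (-c) = projHyp ℓ c := by
      funext x
      simp only [projHyp, inner_neg_left]
      module
    have := rateFn_restrict_iff_of_ae_le μ (-ℓ) (-c) (by simpa using hℓ)
      (ae_inner_le_of_convSupp μ (-ℓ) (-c) fun x hx => by
        rw [inner_neg_left]; exact neg_le_neg (h x hx)) (by rwa [hhyp])
    rwa [hhyp, hproj] at this

end
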